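/- Let p be a prime and let ℤ/p act smoothly (by diffeomorphisms) on the standard smooth sphere S^n. Suppose the action is semilinear with path-connected fixed point set, i.e.: the fixed point set (S^n)^{ℤ/p} is homeomorphic to the standard sphere S^k for some 0 < k ≤ n, and, in case k = n − 2, the complement S^n ∖ (S^n)^{ℤ/p} is homotopy equivalent to S^1. Then 2 ≤ TC^{ℤ/p}(S^n) ≤ 3. -/

import Mathlib

open Set unitInterval

namespace PaperTC

variable {G X : Type*}

/-- The orbit of `x` under the action `act`. -/
def orbit (act : G → X → X) (x : X) : Set X := {y | ∃ g, act g x = y}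

/-- The fixed point set of the action `act`. -/
def fixedSet (act : G → X → X) : Set X := {x | ∀ g, act g x = x}

/-- The fixed point set of a subset `S` of the acting group. -/
def fixedSetOf (act : G → X → X) (S : Set G) : Set X := {x | ∀ g ∈ S, act g x = x}

/-- `minCover P` is the least `k ≥ 1` satisfying `P k`, as an element of `ℕ∞`
(equal to `∞` if there is no such `k`). -/
noncomputable def minCover (P : ℕ → Prop) : ℕ∞ :=
  sInf {k : ℕ∞ | ∃ m : ℕ, k = m ∧ 1 ≤ m ∧ P m}

section Plain

variable (Y : Type*) [TopologicalSpace Y]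

/-- `Y × Y` can be covered by `k` open sets each admitting a motion planner. -/
def TCcover (k : ℕ) : Prop :=
  ∃ U : Fin k → Set (Y × Y),
    (∀ i, IsOpen (U i)) ∧ (⋃ i, U i) = univ ∧
    ∀ i, ∃ s : Y × Y → C(I, Y),
      ContinuousOn s (U i) ∧ ∀ p ∈ U i, s p 0 = p.1 ∧ s p 1 = p.2

/-- Topological complexity (non-reduced, possibly infinite). -/
noncomputable def TC : ℕ∞ := minCover (TCcover Y)

/-- `Y` can be covered by `k` open sets, each of which can be deformed within `Y`
to a point. -/
def catCover (k : ℕ) : Prop :=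
  ∃ U : Fin k → Set Y,
    (∀ i, IsOpen (U i)) ∧ (⋃ i, U i) = univ ∧
    ∀ i, ∃ H : Y × I → Y,
      ContinuousOn H (U i ×ˢ (univ : Set I)) ∧ (∀ x ∈ U i, H (x, 0) = x) ∧
      ∃ y₀, ∀ x ∈ U i, H (x, 1) = y₀

/-- Non-reduced Lusternik–Schnirelmann category. -/
noncomputable def cat : ℕ∞ := minCover (catCover Y)

end Plain

section Equivariant

variable [TopologicalSpace X] (act : G → X → X)

/-- `X × X` can be covered by `k` invariant open sets each admitting an
equivariant motion planner. -/
def eqTCcover (k : ℕ) : Prop :=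
  ∃ U : Fin k → Set (X × X),
    (∀ i, IsOpen (U i)) ∧ (⋃ i, U i) = univ ∧
    ∀ i, (∀ g p, p ∈ U i → (act g p.1, act g p.2) ∈ U i) ∧
      ∃ s : X × X → C(I, X),
        ContinuousOn s (U i) ∧
        (∀ p ∈ U i, s p 0 = p.1 ∧ s p 1 = p.2) ∧
        (∀ g p, p ∈ U i → ∀ t : I, s (act g p.1, act g p.2) t = act g (s p t))

/-- Equivariant topological complexity `TC_G` of Colman and Grant. -/
noncomputable def eqTC : ℕ∞ := minCover (eqTCcover act)

/-- `X × X` can be covered by `k` `(G × G)`-invariant open sets, each admitting a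
`(G × G)`-equivariant section of `π^G : P X ×_{X/G} P X → X × X`; such a section is
recorded by a pair of paths `s₁ p`, `s₂ p`, with the orbit of the endpoint of the first
equal to the orbit of the starting point of the second. -/
def invTCcover (k : ℕ) : Prop :=
  ∃ U : Fin k → Set (X × X),
    (∀ i, IsOpen (U i)) ∧ (⋃ i, U i) = univ ∧
    ∀ i, (∀ g₁ g₂ : G, ∀ p, p ∈ U i → (act g₁ p.1, act g₂ p.2) ∈ U i) ∧
      ∃ s₁ s₂ : X × X → C(I, X),
        ContinuousOn s₁ (U i) ∧ ContinuousOn s₂ (U i) ∧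
        (∀ p ∈ U i, s₁ p 0 = p.1 ∧ s₂ p 1 = p.2 ∧
          orbit act (s₁ p 1) = orbit act (s₂ p 0)) ∧
        (∀ g₁ g₂ : G, ∀ p, p ∈ U i → ∀ t : I,
          s₁ (act g₁ p.1, act g₂ p.2) t = act g₁ (s₁ p t) ∧
          s₂ (act g₁ p.1, act g₂ p.2) t = act g₂ (s₂ p t))

/-- Invariant topological complexity `TC^G` of Lubawski and Marzantowicz. -/
noncomputable def invTC : ℕ∞ := minCover (invTCcover act)

/-- The invariant open set `U` is `G`-compressible into `A`: the inclusion `U ↪ X` is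
`G`-equivariantly homotopic to a `G`-map with values in `A`. -/
def GCompressible (A : Set X) (U : Set X) : Prop :=
  (∀ g x, x ∈ U → act g x ∈ U) ∧
  ∃ H : X × I → X,
    ContinuousOn H (U ×ˢ (univ : Set I)) ∧ (∀ x ∈ U, H (x, 0) = x) ∧
    (∀ g x, x ∈ U → ∀ t : I, H (act g x, t) = act g (H (x, t))) ∧
    (∀ x ∈ U, H (x, 1) ∈ A)

/-- A `G`-categorical set: compressible into a single orbit. -/
def GCategorical (U : Set X) : Prop :=
  ∃ x₀ : X, GCompressible act (orbit act x₀) U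

/-- `X` can be covered by `k` open `G`-categorical sets. -/
def catGCover (k : ℕ) : Prop :=
  ∃ U : Fin k → Set X,
    (∀ i, IsOpen (U i)) ∧ (⋃ i, U i) = univ ∧ ∀ i, GCategorical act (U i)

/-- Equivariant Lusternik–Schnirelmann category `cat_G`. -/
noncomputable def catG : ℕ∞ := minCover (catGCover act)

/-- `X` can be covered by `k` open sets `G`-compressible into `{star}`. -/
def pointedCatGCover (star : X) (k : ℕ) : Prop :=
  ∃ U : Fin k → Set X,
    (∀ i, IsOpen (U i)) ∧ (⋃ i, U i) = univ ∧
    ∀ i, GCompressible act {star} (U i)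

/-- The pointed equivariant category `_{{⋆}}cat_G(X)`. -/
noncomputable def pointedCatG (star : X) : ℕ∞ := minCover (pointedCatGCover act star)

/-- `X` is `G`-contractible: the identity is `G`-homotopic to a map with values in a
single orbit. -/
def GContractible : Prop :=
  ∃ H : X × I → X,
    Continuous H ∧ (∀ x, H (x, 0) = x) ∧
    (∀ g x, ∀ t : I, H (act g x, t) = act g (H (x, t))) ∧
    ∃ x₀ : X, ∀ x, H (x, 1) ∈ orbit act x₀

end Equivariant

/-- The orbit space `X/G` with the quotient topology. -/
abbrev OrbitSpace (act : G → X → X) : Type _ := Quot (fun x y => ∃ g, act g x = y)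

end PaperTC
namespace PaperTC

/-- The unit sphere `S^n ⊆ ℝ^{n+1}` (with the Euclidean metric). -/
abbrev Sph (n : ℕ) : Set (EuclideanSpace ℝ (Fin (n + 1))) := Metric.sphere 0 1

/-- The action of `G` on the unit sphere `S^n` obtained by restricting an orthogonal
representation of `G` on `ℝ^{n+1}`. -/
noncomputable def sphereAct {G : Type*} [Monoid G] {n : ℕ}
    (ρ : G →* (EuclideanSpace ℝ (Fin (n + 1)) ≃ₗᵢ[ℝ] EuclideanSpace ℝ (Fin (n + 1)))) :
    G → ↥(Sph n) → ↥(Sph n) := fun g x =>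
  ⟨ρ g x, mem_sphere_zero_iff_norm.mpr (by
    rw [(ρ g).norm_map]; exact mem_sphere_zero_iff_norm.mp x.2)⟩

end PaperTC

open PaperTC Manifold

/-!
A motion planner on a single `(G × G)`-invariant set covering `X × X` contracts the fixed point
set inside itself, since there orbits are points and the two paths concatenate. A sphere is not
contractible: a contraction would give, after smoothing, a `C¹` retraction of the ball onto its
boundary, and the volume of the image under the linear interpolation from the identity, a
polynomial in the time parameter, would be constant near `0` and vanish at `1`.

For the upper bound, fix three points `a`, `b`, `⋆` of the fixed sphere. The complement of `a` and
its fixed part are Euclidean spaces, so Tietze extension applies to both. An equivariant homotopy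
from the inclusion of a closed invariant set avoiding `a` to the constant map at `⋆` is prescribed
at times `0` and `1`; it is extended first over the fixed points, then over a neighbourhood of
them by averaging arbitrary extensions over the group, and finally orbit by orbit where the action
is free. The averaging is the projection of a `G`-tuple of points of the sphere to the nearest
constant tuple, twisted by the action. An invariant function separating `a` from `b` then gives
three open sets compressible to `⋆` that contain every pair of points.
-/

namespace PaperTC

section Contractibility

open MeasureTheory Polynomial Metric Filter
open scoped NNReal Topology

lemma exists_polynomial_eval_eq_det {E : Type*} [NormedAddCommGroup E] [NormedSpace ℝ E]
    [FiniteDimensional ℝ E] (A : E →L[ℝ] E) :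
    ∃ P : ℝ[X], P.natDegree ≤ Module.finrank ℝ E ∧ ∀ t : ℝ, P.eval t = (1 + t • A).det := by
  let b := Module.finBasis ℝ E
  let M := LinearMap.toMatrix b b (A : E →ₗ[ℝ] E)
  refine ⟨((X : ℝ[X]) • M.map C + (1 : Matrix _ _ ℝ).map C).det, ?_, fun t => ?_⟩
  · simpa only [Fintype.card_fin] using natDegree_det_X_add_C_le M 1
  · have htoMatrix : (1 + t • A).det = (LinearMap.toMatrix b b (1 + t • (A : E →ₗ[ℝ] E))).det :=
      (LinearMap.det_toMatrix b _).symm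
    rw [htoMatrix, ← coe_evalRingHom, RingHom.map_det]
    congr 1
    ext i j
    simp only [map_add, map_smul, LinearMap.toMatrix_one, Matrix.add_apply, Matrix.smul_apply,
      RingHom.mapMatrix_apply, Matrix.map_apply, smul_eq_mul, coe_evalRingHom, eval_mul,
      eval_X, eval_C, M]
    ring

/- Interpolation at `dim E + 1` nodes expresses `det (1 + t A)` as a combination, with coefficients
independent of `A`, of its values at the nodes. -/
lemma exists_polynomial_eval_eq_integral_det {E α : Type*} [NormedAddCommGroup E]
    [NormedSpace ℝ E] [FiniteDimensional ℝ E] [MeasurableSpace α] {μ : Measure α}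
    {A : α → E →L[ℝ] E} (hA : ∀ t : ℝ, Integrable (fun x => (1 + t • A x).det) μ) :
    ∃ P : ℝ[X], ∀ t : ℝ, P.eval t = ∫ x, (1 + t • A x).det ∂μ := by
  let nodes := Finset.range (Module.finrank ℝ E + 1)
  let weight : ℕ → ℝ[X] := Lagrange.basis nodes (fun j : ℕ => (j : ℝ))
  have hdet (t : ℝ) (x : α) : (1 + t • A x).det =
      ∑ j ∈ nodes, (1 + (j : ℝ) • A x).det * (weight j).eval t := by
    obtain ⟨P, hdeg, hP⟩ := exists_polynomial_eval_eq_det (A x)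
    have hlt : P.degree < nodes.card := by
      rw [Finset.card_range]
      exact P.degree_le_natDegree.trans_lt (by exact_mod_cast Nat.lt_succ_of_le hdeg)
    have hinterp := congrArg (eval t)
      (Lagrange.eq_interpolate (v := fun j : ℕ => (j : ℝ)) Nat.cast_injective.injOn hlt)
    simpa only [Lagrange.interpolate_apply, eval_finsetSum, eval_mul, eval_C, hP] using hinterp
  refine ⟨∑ j ∈ nodes, C (∫ x, (1 + (j : ℝ) • A x).det ∂μ) * weight j, fun t => ?_⟩
  simp only [hdet t, eval_finsetSum, eval_mul, eval_C]
  rw [integral_finsetSum nodes fun j _ => (hA j).mul_const ((weight j).eval t)]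
  simp only [integral_mul_const]

lemma nonempty_inter_frontier_of_isPreconnected {X : Type*} [TopologicalSpace X] {s t : Set X}
    (ht : IsPreconnected t) (hs : IsClosed s) (hts : (t ∩ s).Nonempty) (hnot : ¬ t ⊆ s) :
    (t ∩ frontier s).Nonempty := by
  by_contra! hempty
  have hcover : t ⊆ interior s ∪ sᶜ := fun x hx => by
    by_cases hxs : x ∈ s
    · have hnotfr : x ∉ frontier s := fun h => (hempty ▸ ⟨hx, h⟩ : x ∈ (∅ : Set X))
      rw [hs.frontier_eq] at hnotfr
      exact Or.inl (by_contra fun h => hnotfr ⟨hxs, h⟩)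
    · exact Or.inr hxs
  have hmeets : (t ∩ interior s).Nonempty := by
    obtain ⟨x, hxt, hxs⟩ := hts
    exact ⟨x, hxt, (hcover hxt).resolve_right fun h => h hxs⟩
  exact hnot ((ht.subset_left_of_subset_union isOpen_interior hs.isOpen_compl
    (disjoint_compl_right.mono_left interior_subset) hcover hmeets).trans interior_subset)

lemma lipschitzWith_indicator {E F : Type*} [SeminormedAddCommGroup E] [NormedSpace ℝ E]
    [SeminormedAddCommGroup F] {s : Set E} (hs : IsClosed s) {K : ℝ≥0} {g : E → F}
    (hg : LipschitzOnWith K g s) (hzero : ∀ x ∈ frontier s, g x = 0) :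
    LipschitzWith K (s.indicator g) := by
  have hcross : ∀ x ∈ s, ∀ y ∉ s, ‖g x‖ ≤ K * ‖x - y‖ := fun x hx y hy => by
    obtain ⟨z, hzseg, hzfr⟩ := nonempty_inter_frontier_of_isPreconnected
      (convex_segment (𝕜 := ℝ) x y).isPreconnected hs ⟨x, left_mem_segment ℝ x y, hx⟩
      fun hsub => hy (hsub (right_mem_segment ℝ x y))
    calc ‖g x‖ = ‖g x - g z‖ := by rw [hzero z hzfr, sub_zero]
      _ ≤ K * ‖x - z‖ := hg.norm_sub_le hx (hs.frontier_subset hzfr)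
      _ ≤ K * ‖x - y‖ := by
        have hbetween := dist_add_dist_of_mem_segment hzseg
        simp only [dist_eq_norm] at hbetween
        gcongr
        linarith [norm_nonneg (z - y)]
  refine LipschitzWith.of_dist_le_mul fun x y => ?_
  rw [dist_eq_norm, dist_eq_norm]
  by_cases hx : x ∈ s <;> by_cases hy : y ∈ s <;> simp only [indicator, hx, hy, if_true, if_false]
  · exact hg.norm_sub_le hx hy
  · simpa only [sub_zero] using hcross x hx y hy
  · simpa only [zero_sub, norm_neg, norm_sub_rev x y] using hcross y hy x hx
  · simp only [sub_self, norm_zero]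
    positivity

lemma bijective_id_add_of_lipschitzWith {E : Type*} [NormedAddCommGroup E] [NormedSpace ℝ E]
    [CompleteSpace E] {K : ℝ≥0} (hK : K < 1) {g : E → E} (hg : LipschitzWith K g) :
    Function.Bijective fun x => x + g x := by
  have happrox : ApproximatesLinearOn (fun x => x + g x)
      (ContinuousLinearEquiv.refl ℝ E : E →L[ℝ] E) univ K := by
    rw [ApproximatesLinearOn.approximatesLinearOn_iff_lipschitzOnWith, lipschitzOnWith_univ]
    convert hg using 1
    ext x
    simp
  have hsmall : Subsingleton E ∨ K < ‖((ContinuousLinearEquiv.refl ℝ E).symm : E →L[ℝ] E)‖₊⁻¹ := by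
    rcases subsingleton_or_nontrivial E with hE | hE
    · exact Or.inl hE
    · right
      have hnorm : ‖((ContinuousLinearEquiv.refl ℝ E).symm : E →L[ℝ] E)‖₊ = 1 :=
        ContinuousLinearMap.nnnorm_id
      rwa [hnorm, inv_one]
  exact ⟨injOn_univ.mp (happrox.injOn hsmall), happrox.surjective hsmall⟩

lemma bijOn_of_eqOn_id_compl {α : Type*} {f : α → α} (hf : Function.Bijective f) {s : Set α}
    (hid : EqOn f id sᶜ) : BijOn f s s := by
  have hcompl : BijOn f sᶜ sᶜ := (bijOn_id sᶜ).congr hid.symm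
  simpa only [compl_compl] using hcompl.compl hf

lemma eventually_bijOn_ball_id_add_smul {E : Type*} [NormedAddCommGroup E] [NormedSpace ℝ E]
    [CompleteSpace E] {K : ℝ≥0} {g : E → E} (hg : LipschitzOnWith K g (closedBall 0 1))
    (hzero : ∀ x ∈ sphere (0 : E) 1, g x = 0) :
    ∀ᶠ t : ℝ in 𝓝 0, BijOn (fun x => x + t • g x) (ball 0 1) (ball 0 1) := by
  let g₀ := (closedBall (0 : E) 1).indicator g
  have hg₀ : LipschitzWith K g₀ := lipschitzWith_indicator isClosed_closedBall hg
    fun x hx => hzero x (frontier_closedBall_subset_sphere hx)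
  have hg₀zero : ∀ x ∉ ball (0 : E) 1, g₀ x = 0 := fun x hx => by
    by_cases hx' : x ∈ closedBall (0 : E) 1
    · exact (indicator_of_mem hx' g).trans
        (hzero x ((mem_closedBall.mp hx').antisymm (not_lt.mp hx)))
    · exact indicator_of_notMem hx' g
  have hsmall : ∀ᶠ t : ℝ in 𝓝 0, ‖t‖₊ * K < 1 :=
    (by fun_prop : Continuous fun t : ℝ => ‖t‖₊ * K).continuousAt.eventually_lt
      continuousAt_const (by simp)
  filter_upwards [hsmall] with t ht
  have hlip : LipschitzWith (‖t‖₊ * K) fun x => t • g₀ x :=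
    (lipschitzWith_smul t).comp hg₀
  refine (bijOn_of_eqOn_id_compl (bijective_id_add_of_lipschitzWith ht hlip)
    fun x hx => ?_).congr fun x hx => ?_
  · simp [hg₀zero x hx]
  · simp only [g₀, indicator_of_mem (ball_subset_closedBall hx)]

lemma eventually_integral_det_id_add_smul_eq {E : Type*} [NormedAddCommGroup E]
    [NormedSpace ℝ E] [FiniteDimensional ℝ E] [MeasurableSpace E] [BorelSpace E] (μ : Measure E)
    [μ.IsAddHaarMeasure] {g : E → E} (hg : ContDiff ℝ 1 g)
    (hzero : ∀ x ∈ sphere (0 : E) 1, g x = 0) :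
    ∀ᶠ t : ℝ in 𝓝 0, ∫ x in ball (0 : E) 1, (1 + t • fderiv ℝ g x).det ∂μ = μ.real (ball 0 1) := by
  obtain ⟨K, hK⟩ := hg.locallyLipschitz.locallyLipschitzOn.exists_lipschitzOnWith_of_compact
    (isCompact_closedBall (0 : E) 1)
  have : Continuous (fderiv ℝ g) := hg.continuous_fderiv one_ne_zero
  have hpos : ∀ᶠ t : ℝ in 𝓝 0, ∀ x ∈ closedBall (0 : E) 1, 0 < (1 + t • fderiv ℝ g x).det := by
    refine (isCompact_closedBall (0 : E) 1).eventually_forall_of_forall_eventually fun x _ => ?_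
    have hcont : Continuous fun z : ℝ × E => (1 + z.1 • fderiv ℝ g z.2).det :=
      ContinuousLinearMap.continuous_det.comp (by fun_prop)
    have hone : (1 + (0 : ℝ) • fderiv ℝ g x).det = 1 := by
      rw [zero_smul, add_zero]
      exact LinearMap.det_id
    exact hcont.continuousAt.eventually_const_lt (by simp only [hone, zero_lt_one])
  filter_upwards [eventually_bijOn_ball_id_add_smul hK hzero, hpos] with t hbij hdet
  have hderiv : ∀ x ∈ ball (0 : E) 1, HasFDerivWithinAt (fun x => x + t • g x)
      (1 + t • fderiv ℝ g x) (ball 0 1) x := fun x _ =>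
    ((hasFDerivAt_id x).add
      ((hg.differentiable one_ne_zero x).hasFDerivAt.const_smul t)).hasFDerivWithinAt
  have hchange := integral_image_eq_integral_abs_det_fderiv_smul μ measurableSet_ball hderiv
    hbij.injOn fun _ => (1 : ℝ)
  rw [hbij.image_eq, setIntegral_const, smul_eq_mul, mul_one] at hchange
  rw [hchange]
  refine setIntegral_congr_fun measurableSet_ball fun x hx => ?_
  simp only [abs_of_pos (hdet x (ball_subset_closedBall hx)), smul_eq_mul, mul_one]

/- The image of the derivative is orthogonal to the nonzero vector `r x`. -/
lemma det_fderiv_eq_zero_of_norm_eq_one {E : Type*} [NormedAddCommGroup E]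
    [InnerProductSpace ℝ E] [FiniteDimensional ℝ E] {r : E → E} (hr : ∀ x, ‖r x‖ = 1) {x : E}
    {r' : E →L[ℝ] E} (hderiv : HasFDerivAt r r' x) : r'.det = 0 := by
  have horth (u : E) : inner ℝ (r x) (r' u) = 0 := by
    have hconst : (fun y => ‖r y‖ ^ 2) = fun _ => (1 : ℝ) := funext fun y => by simp [hr y]
    have hsq := hderiv.norm_sq
    rw [hconst] at hsq
    simpa using DFunLike.congr_fun (hsq.unique (hasFDerivAt_const (1 : ℝ) x)) u
  by_contra hdet
  obtain ⟨u, hu⟩ := ((Module.End.isUnit_iff _).mp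
    ((LinearMap.isUnit_iff_isUnit_det (r' : E →ₗ[ℝ] E)).mpr (isUnit_iff_ne_zero.mpr hdet))).2 (r x)
  have hself := horth u
  rw [show r' u = r x from hu, real_inner_self_eq_norm_sq, hr x] at hself
  norm_num at hself

theorem not_exists_contDiff_retraction_onto_sphere {E : Type*} [NormedAddCommGroup E]
    [InnerProductSpace ℝ E] [FiniteDimensional ℝ E] :
    ¬ ∃ r : E → E, ContDiff ℝ 1 r ∧ (∀ x, ‖r x‖ = 1) ∧ ∀ x ∈ sphere (0 : E) 1, r x = x := by
  rintro ⟨r, hr, hnorm, hid⟩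
  borelize E
  let μ : Measure E := Measure.addHaar
  let g : E → E := fun x => r x - x
  have hg : ContDiff ℝ 1 g := hr.sub contDiff_id
  have : Continuous (fderiv ℝ g) := hg.continuous_fderiv one_ne_zero
  obtain ⟨P, hP⟩ := exists_polynomial_eval_eq_integral_det (A := fderiv ℝ g)
    (μ := μ.restrict (ball 0 1)) fun t =>
      ((ContinuousLinearMap.continuous_det.comp (by fun_prop)).continuousOn.integrableOn_compact
        (isCompact_closedBall (0 : E) 1)).mono_set ball_subset_closedBall
  have hconst : P = C (μ.real (ball 0 1)) := by
    have hnear : ∀ᶠ t : ℝ in 𝓝 0, P.eval t = (C (μ.real (ball 0 1))).eval t := by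
      filter_upwards [eventually_integral_det_id_add_smul_eq μ hg
        fun x hx => by simp [g, hid x hx]] with t ht
      rw [hP, ht, eval_C]
    exact eq_of_infinite_eval_eq _ _ (infinite_of_mem_nhds 0 hnear)
  have hone : P.eval 1 = 0 := by
    rw [hP]
    refine integral_eq_zero_of_ae (Eventually.of_forall fun x => ?_)
    refine det_fderiv_eq_zero_of_norm_eq_one hnorm (x := x) ?_
    have hsum := (hasFDerivAt_id x).add (hg.differentiable one_ne_zero x).hasFDerivAt
    rw [one_smul]
    exact hsum.congr_of_eventuallyEq (Eventually.of_forall fun y => (add_sub_cancel y (r y)).symm)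
  have hball : 0 < μ.real (ball 0 1) :=
    ENNReal.toReal_pos (measure_ball_pos μ 0 one_pos).ne' measure_ball_lt_top.ne
  rw [hconst, eval_C] at hone
  exact hball.ne' hone

lemma contDiffAt_normalize {E : Type*} [NormedAddCommGroup E] [InnerProductSpace ℝ E]
    {n : WithTop ℕ∞} {x : E} (hx : x ≠ 0) : ContDiffAt ℝ n NormedSpace.normalize x :=
  ((contDiffAt_norm ℝ hx).inv (norm_ne_zero_iff.mpr hx)).smul contDiffAt_id

lemma normalize_mem_sphere {E : Type*} [NormedAddCommGroup E] [NormedSpace ℝ E] {x : E}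
    (hx : x ≠ 0) : NormedSpace.normalize x ∈ sphere (0 : E) 1 :=
  mem_sphere_zero_iff_norm.mpr (NormedSpace.norm_normalize_eq_one_iff.mpr hx)

/- A contraction of the sphere is read radially: the sphere of radius `s` follows the contraction
at a time that goes from `0` to `1` as `s` goes from `1 / 2` to `1 / 4`. -/
lemma exists_continuous_extension_normalize {E : Type*} [NormedAddCommGroup E] [NormedSpace ℝ E]
    [ContractibleSpace (sphere (0 : E) 1)] :
    ∃ f : E → E, Continuous f ∧ (∀ x, ‖f x‖ = 1) ∧
      ∀ x, 1 / 2 < ‖x‖ → f x = NormedSpace.normalize x := by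
  classical
  obtain ⟨c, ⟨H⟩⟩ := id_nullhomotopic (sphere (0 : E) 1)
  let time : E → I := fun x => projIcc 0 1 zero_le_one (2 - 4 * ‖x‖)
  have htime : Continuous time := continuous_projIcc.comp (by fun_prop)
  let f : E → sphere (0 : E) 1 := fun x =>
    if hx : x = 0 then c else H (time x, ⟨_, normalize_mem_sphere hx⟩)
  have hinner : EqOn f (fun _ => c) (ball 0 (1 / 4)) := fun x hx => by
    have hnorm : ‖x‖ < 1 / 4 := mem_ball_zero_iff.mp hx
    have hend : time x = 1 := projIcc_of_right_le _ (by linarith)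
    by_cases hx0 : x = 0
    · simp only [f, dif_pos hx0]
    · simp only [f, dif_neg hx0, hend, H.apply_one, ContinuousMap.const_apply]
  have houter : ContinuousOn f {0}ᶜ := by
    rw [continuousOn_iff_continuous_domRestrict]
    have hcongr : ({0}ᶜ : Set E).domRestrict f =
        fun x : ({0}ᶜ : Set E) => H (time x, ⟨_, normalize_mem_sphere x.2⟩) :=
      funext fun x => dif_neg x.2
    rw [hcongr]
    refine H.continuous.comp ((htime.comp continuous_subtype_val).prodMk
      (Continuous.subtype_mk ?_ _))
    exact (continuous_subtype_val.norm.inv₀ fun x => norm_ne_zero_iff.mpr x.2).smul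
      continuous_subtype_val
  refine ⟨fun x => f x, continuous_subtype_val.comp (continuous_iff_continuousAt.mpr fun x => ?_),
    fun x => mem_sphere_zero_iff_norm.mp (f x).2, fun x hx => ?_⟩
  · rcases eq_or_ne x 0 with rfl | hx
    · exact continuousAt_const.congr
        (hinner.eventuallyEq_of_mem (ball_mem_nhds 0 (by norm_num))).symm
    · exact houter.continuousAt (isOpen_compl_singleton.mem_nhds hx)
  · have hx0 : x ≠ 0 := norm_pos_iff.mp (by linarith)
    have hstart : time x = 0 := projIcc_of_le_left _ (by linarith)
    simp only [f, dif_neg hx0, hstart, H.apply_zero, ContinuousMap.id_apply]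

lemma exists_contDiff_retraction_of_continuous {E : Type*} [NormedAddCommGroup E]
    [InnerProductSpace ℝ E] [FiniteDimensional ℝ E] {f : E → E} (hf : Continuous f)
    (hnorm : ∀ x, ‖f x‖ = 1) (hradial : ∀ x, 1 / 2 < ‖x‖ → f x = NormedSpace.normalize x) :
    ∃ r : E → E, ContDiff ℝ 1 r ∧ (∀ x, ‖r x‖ = 1) ∧ ∀ x ∈ sphere (0 : E) 1, r x = x := by
  let U : Set E := {x | 1 / 2 < ‖x‖}
  have hU : IsOpen U := isOpen_lt continuous_const continuous_norm
  have hsphere : sphere (0 : E) 1 ⊆ U := fun x hx => by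
    simp only [U, mem_ofPred_eq, mem_sphere_zero_iff_norm.mp hx]
    norm_num
  have hsmooth : ContDiffOn ℝ 1 f U := fun x hx =>
    ((contDiffAt_normalize (norm_pos_iff.mp (one_half_pos.trans hx))).congr_of_eventuallyEq
      ((show EqOn f NormedSpace.normalize U from hradial).eventuallyEq_of_mem
        (hU.mem_nhds hx))).contDiffWithinAt
  obtain ⟨g, hg, hclose, heq, -⟩ := hf.exists_contDiff_approx_and_eqOn 1 continuous_const
    (fun _ => zero_lt_one) isClosed_sphere (hU.mem_nhdsSet.mpr hsphere) hsmooth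
  have hne (x : E) : g x ≠ 0 := fun hx => by
    have hdist := hclose x
    rw [hx, dist_zero_left, hnorm] at hdist
    exact lt_irrefl _ hdist
  refine ⟨fun x => NormedSpace.normalize (g x), contDiff_iff_contDiffAt.mpr fun x =>
    (contDiffAt_normalize (hne x)).comp x hg.contDiffAt,
    fun x => NormedSpace.norm_normalize_eq_one_iff.mpr (hne x), fun x hx => ?_⟩
  simp only [heq hx]
  rw [NormedSpace.normalize_eq_self_of_norm_eq_one (hnorm x), hradial x (hsphere hx),
    NormedSpace.normalize_eq_self_of_norm_eq_one (mem_sphere_zero_iff_norm.mp hx)]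

theorem not_contractibleSpace_sphere {E : Type*} [NormedAddCommGroup E] [InnerProductSpace ℝ E]
    [FiniteDimensional ℝ E] : ¬ ContractibleSpace (sphere (0 : E) 1) := fun _ => by
  obtain ⟨f, hf, hnorm, hradial⟩ := exists_continuous_extension_normalize (E := E)
  exact not_exists_contDiff_retraction_onto_sphere
    (exists_contDiff_retraction_of_continuous hf hnorm hradial)

end Contractibility

section LowerBound

lemma minCover_le {P : ℕ → Prop} {k : ℕ} (hk : 1 ≤ k) (h : P k) : minCover P ≤ k :=
  sInf_le ⟨k, rfl, hk, h⟩

lemma two_le_minCover {P : ℕ → Prop} (h : ¬ P 1) : 2 ≤ minCover P := by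
  refine le_sInf ?_
  rintro _ ⟨m, rfl, hm, hPm⟩
  have hne : m ≠ 1 := fun hm1 => h (hm1 ▸ hPm)
  exact_mod_cast (by omega : 2 ≤ m)

lemma orbit_eq_singleton_of_mem_fixedSet {G X : Type*} [Nonempty G] {act : G → X → X} {x : X}
    (hx : x ∈ fixedSet act) : orbit act x = {x} := by
  ext y
  simp only [orbit, mem_ofPred_eq, hx _, exists_const, mem_singleton_iff, eq_comm]

lemma contractibleSpace_fixedSet_of_invTCcover_one {G X : Type*} [Nonempty G]
    [TopologicalSpace X] {act : G → X → X} (hne : (fixedSet act).Nonempty)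
    (h : invTCcover act 1) : ContractibleSpace (fixedSet act) := by
  obtain ⟨U, -, hcover, hplan⟩ := h
  obtain ⟨-, s₁, s₂, hs₁, hs₂, hends, hequiv⟩ := hplan 0
  have hU : U 0 = univ := (iSup_unique (f := U)).symm.trans hcover
  rw [hU] at hs₁ hs₂ hends hequiv
  obtain ⟨y, hy⟩ := hne
  have hfixed (x : fixedSet act) (t : I) :
      s₁ (x, y) t ∈ fixedSet act ∧ s₂ (x, y) t ∈ fixedSet act := by
    constructor <;> intro g
    · simpa only [x.2 g, hy g] using (hequiv g g (x, y) trivial t).1.symm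
    · simpa only [x.2 g, hy g] using (hequiv g g (x, y) trivial t).2.symm
  have hmid (x : fixedSet act) : s₁ (x, y) 1 = s₂ (x, y) 0 := by
    have horbit := (hends (x, y) trivial).2.2
    rwa [orbit_eq_singleton_of_mem_fixedSet (hfixed x 1).1,
      orbit_eq_singleton_of_mem_fixedSet (hfixed x 0).2, singleton_eq_singleton_iff] at horbit
  have hcont {s : X × X → C(I, X)} (hs : ContinuousOn s univ) :
      Continuous fun q : I × fixedSet act => s (q.2, y) q.1 :=
    ((continuousOn_univ.mp hs).comp (by fun_prop : Continuous fun q : I × fixedSet act =>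
      ((q.2 : X), y))).eval continuous_fst
  let middle : C(fixedSet act, fixedSet act) :=
    ⟨fun x => ⟨s₁ (x, y) 1, (hfixed x 1).1⟩,
      ((hcont hs₁).comp (by fun_prop : Continuous fun x => ((1 : I), x))).subtype_mk _⟩
  have hfirst : (ContinuousMap.id (fixedSet act)).Homotopic middle :=
    ⟨{ toFun := fun q => ⟨s₁ (q.2, y) q.1, (hfixed q.2 q.1).1⟩
       continuous_toFun := (hcont hs₁).subtype_mk _
       map_zero_left := fun x => Subtype.ext (hends (x, y) trivial).1
       map_one_left := fun _ => rfl }⟩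
  have hsecond : middle.Homotopic (ContinuousMap.const _ ⟨y, hy⟩) :=
    ⟨{ toFun := fun q => ⟨s₂ (q.2, y) q.1, (hfixed q.2 q.1).2⟩
       continuous_toFun := (hcont hs₂).subtype_mk _
       map_zero_left := fun x => Subtype.ext (hmid x).symm
       map_one_left := fun x => Subtype.ext (hends (x, y) trivial).2.1 }⟩
  exact (contractible_iff_id_nullhomotopic _).mpr ⟨_, hfirst.trans hsecond⟩

end LowerBound

section EquivariantExtension

open Topology MulAction

universe u v

lemma exists_continuous_extension_mapsTo {Z : Type u} {X : Type v} [TopologicalSpace Z]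
    [NormalSpace Z] [TopologicalSpace X] {M : Set X} [TietzeExtension.{u, v} M] {A : Set Z}
    (hA : IsClosed A) {f : Z → X} (hf : ContinuousOn f A) (hM : MapsTo f A M) :
    ∃ F : Z → X, Continuous F ∧ (∀ z, F z ∈ M) ∧ EqOn F f A := by
  obtain ⟨F, hF⟩ := ContinuousMap.exists_restrict_eq hA
    (⟨hM.restrict f A M, hf.mapsToRestrict hM⟩ : C(A, M))
  exact ⟨fun z => F z, continuous_subtype_val.comp F.continuous, fun z => (F z).2,
    fun z hz => congrArg Subtype.val (DFunLike.congr_fun hF ⟨z, hz⟩)⟩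

/-- An action is semifree if every point is either fixed by the whole group or moved by every
nontrivial element. -/
def IsSemifree (G X : Type*) [Group G] [MulAction G X] : Prop :=
  ∀ g : G, g ≠ 1 → ∀ x : X, g • x = x → x ∈ fixedPoints G X

/-- An equivariant neighbourhood retraction of `G → X`, on which `k : G` acts by
`m ↦ fun g => m (g * k)`, onto the copy of `X` formed by the orbit maps `fun g => g • x`.
It replaces equivariant convexity: it turns a continuous map into a nearby equivariant one. -/
structure OrbitMapRetraction (G X : Type*) [Group G] [MulAction G X] [TopologicalSpace X] where
  domain : Set (G → X)
  toFun : (G → X) → X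
  isOpen_domain : IsOpen domain
  orbitMap_mem : ∀ x : X, (fun g : G => g • x) ∈ domain
  map_orbitMap : ∀ x : X, toFun (fun g : G => g • x) = x
  continuousOn : ContinuousOn toFun domain
  translate_mem : ∀ (k : G) {m : G → X}, m ∈ domain → (fun g => m (g * k)) ∈ domain
  map_translate : ∀ (k : G) {m : G → X}, m ∈ domain → toFun (fun g => m (g * k)) = k • toFun m

/-- `f` restricts to a continuous `G`-map from the closed invariant set `B` to `M`.
The values of `f` outside `B` are irrelevant. -/
structure EquivariantMapOn (G : Type*) {Z X : Type*} [Group G] [MulAction G Z] [MulAction G X]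
    [TopologicalSpace Z] [TopologicalSpace X] (f : Z → X) (B : Set Z) (M : Set X) : Prop where
  isClosed : IsClosed B
  smul_mem : ∀ (g : G) {z : Z}, z ∈ B → g • z ∈ B
  continuousOn : ContinuousOn f B
  mapsTo : MapsTo f B M
  map_smul : ∀ (g : G) {z : Z}, z ∈ B → f (g • z) = g • f z

namespace EquivariantMapOn

variable {G : Type*} [Group G] {Z : Type u} {X : Type v} [TopologicalSpace Z]
  [TopologicalSpace X] [MulAction G Z] [MulAction G X] [ContinuousConstSMul G Z] {M : Set X}
  {f : Z → X} {A : Set Z}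

lemma exists_extension_fixedPoints [T2Space Z] [NormalSpace Z]
    [TietzeExtension.{u, v} ↥(M ∩ fixedPoints G X)] (hf : EquivariantMapOn G f A M) :
    ∃ F : Z → X, EquivariantMapOn G F (A ∪ fixedPoints G Z) M ∧ EqOn F f A := by
  classical
  have hclosed : IsClosed (fixedPoints G Z) := by
    simp only [fixedPoints, Set.ofPred_forall]
    exact isClosed_iInter fun g => isClosed_eq (continuous_const_smul g) continuous_id
  obtain ⟨F₀, hF₀, hF₀M, hF₀f⟩ := exists_continuous_extension_mapsTo
    (M := M ∩ fixedPoints G X) (hf.isClosed.inter hclosed) (hf.continuousOn.mono inter_subset_left)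
    fun z hz => ⟨hf.mapsTo hz.1, fun g => by rw [← hf.map_smul g hz.1, hz.2 g]⟩
  let F : Z → X := A.piecewise f F₀
  have hFf : EqOn F f A := piecewise_eqOn A f F₀
  have hFF₀ : EqOn F F₀ (fixedPoints G Z) := fun z hz => by
    by_cases hzA : z ∈ A
    · rw [hFf hzA, hF₀f ⟨hzA, hz⟩]
    · exact piecewise_eq_of_notMem A f F₀ hzA
  refine ⟨F, ⟨hf.isClosed.union hclosed, ?_, ?_, ?_, ?_⟩, hFf⟩
  · rintro g z (hz | hz)
    · exact Or.inl (hf.smul_mem g hz)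
    · exact Or.inr ((hz g).symm ▸ hz)
  · exact (hf.continuousOn.congr hFf).union_of_isClosed (hF₀.continuousOn.congr hFF₀)
      hf.isClosed hclosed
  · exact (hf.mapsTo.congr hFf.symm).union fun z hz => hFF₀ hz ▸ (hF₀M z).1
  · rintro g z (hz | hz)
    · rw [hFf (hf.smul_mem g hz), hFf hz, hf.map_smul g hz]
    · rw [hz g, hFF₀ hz, (hF₀M z).2 g]

lemma exists_extension_mem_nhdsSet [Finite G] [NormalSpace Z] [TietzeExtension.{u, v} M]
    (ρ : OrbitMapRetraction G X) (hM : IsOpen M) (hf : EquivariantMapOn G f A M) :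
    ∃ B ∈ 𝓝ˢ A, ∃ F : Z → X, EquivariantMapOn G F B M ∧ EqOn F f A := by
  obtain ⟨F₀, hF₀, -, hF₀f⟩ := exists_continuous_extension_mapsTo hf.isClosed hf.continuousOn
    hf.mapsTo
  let m : Z → G → X := fun z g => F₀ (g • z)
  have hm : Continuous m := by fun_prop
  have hmA : ∀ z ∈ A, m z = fun g => g • f z := fun z hz => funext fun g => by
    rw [← hf.map_smul g hz, ← hF₀f (hf.smul_mem g hz)]
  have hmsmul (k : G) (z : Z) : m (k • z) = fun g => m z (g * k) := by
    simp only [m, mul_smul]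
  let N : Set Z := m ⁻¹' (ρ.domain ∩ ρ.toFun ⁻¹' M)
  have hN : IsOpen N := (ρ.continuousOn.isOpen_inter_preimage ρ.isOpen_domain hM).preimage hm
  have hAN : A ⊆ N := fun z hz => by
    simp only [N, mem_preimage, hmA z hz, mem_inter_iff, ρ.map_orbitMap]
    exact ⟨ρ.orbitMap_mem _, hf.mapsTo hz⟩
  obtain ⟨O, hO, hAO, hON⟩ := normal_exists_closure_subset hf.isClosed hN hAN
  let B : Set Z := ⋂ g : G, (g • ·) ⁻¹' closure O
  have hBN : B ⊆ N := fun z hz => hON (by simpa using mem_iInter.mp hz (1 : G))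
  have hBnhds : B ∈ 𝓝ˢ A := by
    refine Filter.mem_of_superset ((isOpen_iInter_of_finite fun g : G =>
      hO.preimage (continuous_const_smul g)).mem_nhdsSet.mpr fun z hz =>
        mem_iInter.mpr fun g => hAO (hf.smul_mem g hz)) ?_
    exact iInter_mono fun g => preimage_mono subset_closure
  refine ⟨B, hBnhds, fun z => ρ.toFun (m z), ⟨?_, ?_, ?_, ?_, ?_⟩, fun z hz => ?_⟩
  · exact isClosed_iInter fun g => isClosed_closure.preimage (continuous_const_smul g)
  · intro k z hz
    refine mem_iInter.mpr fun g => ?_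
    simpa only [mem_preimage, smul_smul] using mem_iInter.mp hz (g * k)
  · exact ρ.continuousOn.comp hm.continuousOn fun z hz => (hBN hz).1
  · exact fun z hz => (hBN hz).2
  · intro k z hz
    simp only [hmsmul, ρ.map_translate k (hBN hz).1]
  · simp only [hmA z hz, ρ.map_orbitMap]

lemma exists_extension_translates [Finite G] [NormalSpace Z] [ContinuousConstSMul G X]
    [TietzeExtension.{u, v} M] (hM : ∀ (g : G), ∀ x ∈ M, g • x ∈ M)
    (hf : EquivariantMapOn G f A M) {C : Set Z} (hC : IsClosed C)
    (hfree : ∀ g : G, g ≠ 1 → ∀ z ∈ C, g • z ∉ C) :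
    ∃ F : Z → X, EquivariantMapOn G F (A ∪ ⋃ g : G, (g • ·) ⁻¹' C) M ∧ EqOn F f A := by
  classical
  obtain ⟨c, hc, hcM, hcf⟩ := exists_continuous_extension_mapsTo (hf.isClosed.inter hC)
    (hf.continuousOn.mono inter_subset_left) (hf.mapsTo.mono_left inter_subset_left)
  let F : Z → X := fun z => if h : ∃ g : G, g • z ∈ C then
    h.choose⁻¹ • c (h.choose • z) else f z
  have hF (g : G) {z : Z} (hz : g • z ∈ C) : F z = g⁻¹ • c (g • z) := by
    have hex : ∃ g : G, g • z ∈ C := ⟨g, hz⟩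
    have hunique : hex.choose = g := by
      by_contra hne
      refine hfree (hex.choose * g⁻¹) (fun h => hne (mul_inv_eq_one.mp h)) _ hz ?_
      rw [smul_smul, inv_mul_cancel_right]
      exact hex.choose_spec
    simp only [F, dif_pos hex, hunique]
  have hFf : EqOn F f A := fun z hz => by
    by_cases hex : ∃ g : G, g • z ∈ C
    · obtain ⟨g, hg⟩ := hex
      rw [hF g hg, hcf ⟨hf.smul_mem g hz, hg⟩, hf.map_smul g hz, inv_smul_smul]
    · exact dif_neg hex
  have hclosed (g : G) : IsClosed ((g • ·) ⁻¹' C : Set Z) :=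
    hC.preimage (continuous_const_smul g)
  refine ⟨F, ⟨hf.isClosed.union (isClosed_iUnion_of_finite hclosed), ?_, ?_, ?_, ?_⟩, hFf⟩
  · rintro k z (hz | hz)
    · exact Or.inl (hf.smul_mem k hz)
    · obtain ⟨g, hg⟩ := mem_iUnion.mp hz
      refine Or.inr (mem_iUnion.mpr ⟨g * k⁻¹, ?_⟩)
      simpa only [mem_preimage, smul_smul, inv_mul_cancel_right] using hg
  · refine (hf.continuousOn.congr hFf).union_of_isClosed ?_ hf.isClosed
      (isClosed_iUnion_of_finite hclosed)
    refine (locallyFinite_of_finite _).continuousOn_iUnion hclosed fun g => ?_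
    exact (by fun_prop : Continuous fun z => g⁻¹ • c (g • z)).continuousOn.congr fun z hz => hF g hz
  · refine (hf.mapsTo.congr hFf.symm).union fun z hz => ?_
    obtain ⟨g, hg⟩ := mem_iUnion.mp hz
    exact hF g hg ▸ hM _ _ (hcM _)
  · rintro k z (hz | hz)
    · rw [hFf (hf.smul_mem k hz), hFf hz, hf.map_smul k hz]
    · obtain ⟨g, hg⟩ := mem_iUnion.mp hz
      have htranslate : (g * k⁻¹) • k • z = g • z := by rw [smul_smul, inv_mul_cancel_right]
      rw [hF g hg, hF (g * k⁻¹) (by rwa [htranslate]), htranslate, smul_smul, mul_inv_rev, inv_inv]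

end EquivariantMapOn

lemma exists_isClosed_nhds_disjoint_translates {G Z : Type*} [Group G] [Finite G] [MulAction G Z]
    [TopologicalSpace Z] [ContinuousConstSMul G Z] [T2Space Z] [RegularSpace Z] {z : Z}
    (hz : ∀ g : G, g ≠ 1 → g • z ≠ z) :
    ∃ C ∈ 𝓝 z, IsClosed C ∧ ∀ g : G, g ≠ 1 → ∀ w ∈ C, g • w ∉ C := by
  have hlocal (g : G) : ∃ W ∈ 𝓝 z, g ≠ 1 → ∀ w ∈ W, g • w ∉ W := by
    by_cases hg : g = 1
    · exact ⟨univ, Filter.univ_mem, fun h => absurd hg h⟩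
    · obtain ⟨U, V, hU, hV, hzU, hgzV, hUV⟩ := t2_separation (hz g hg).symm
      exact ⟨U ∩ (g • ·) ⁻¹' V, Filter.inter_mem (hU.mem_nhds hzU)
        ((hV.preimage (continuous_const_smul g)).mem_nhds hgzV),
        fun _ w hw hgw => disjoint_left.mp hUV hgw.1 hw.2⟩
  choose W hWnhds hW using hlocal
  obtain ⟨C, hCnhds, hC, hCW⟩ :=
    exists_mem_nhds_isClosed_subset (Filter.iInter_mem.mpr hWnhds)
  exact ⟨C, hCnhds, hC, fun g hg w hw hgw =>
    hW g hg w (mem_iInter.mp (hCW hw) g) (mem_iInter.mp (hCW hgw) g)⟩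

namespace EquivariantMapOn

variable {G : Type*} [Group G] [Finite G] {Z : Type u} {X : Type v} [TopologicalSpace Z]
  [T2Space Z] [TopologicalSpace X] [MulAction G Z] [MulAction G X]
  [ContinuousConstSMul G Z] [ContinuousConstSMul G X] {M : Set X} [TietzeExtension.{u, v} M]
  {f : Z → X} {A : Set Z}

lemma exists_extension_of_isCompact_of_free [NormalSpace Z] (hM : ∀ (g : G), ∀ x ∈ M, g • x ∈ M)
    {K : Set Z} (hK : IsCompact K) (hfree : ∀ z ∈ K, ∀ g : G, g ≠ 1 → g • z ≠ z)
    (hf : EquivariantMapOn G f A M) :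
    ∃ B, ∃ F : Z → X, EquivariantMapOn G F B M ∧ A ∪ K ⊆ B ∧ EqOn F f A := by
  refine hK.induction_on (p := fun S => ∀ (A : Set Z) (f : Z → X), EquivariantMapOn G f A M →
    ∃ B, ∃ F : Z → X, EquivariantMapOn G F B M ∧ A ∪ S ⊆ B ∧ EqOn F f A)
    (fun A f hf => ⟨A, f, hf, (union_empty A).subset, eqOn_refl f A⟩)
    (fun S T hST hT A f hf => ?_) (fun S T hS hT A f hf => ?_) (fun z hz => ?_) A f hf
  · obtain ⟨B, F, hF, hB, hFf⟩ := hT A f hf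
    exact ⟨B, F, hF, (union_subset_union_right A hST).trans hB, hFf⟩
  · obtain ⟨B, F, hF, hB, hFf⟩ := hS A f hf
    obtain ⟨B', F', hF', hB', hF'F⟩ := hT B F hF
    have hAB : A ⊆ B := subset_union_left.trans hB
    refine ⟨B', F', hF', ?_, (hF'F.mono hAB).trans hFf⟩
    rw [← union_assoc]
    exact (union_subset_union_left T hB).trans hB'
  · obtain ⟨C, hCnhds, hC, hCfree⟩ := exists_isClosed_nhds_disjoint_translates (hfree z hz)
    refine ⟨C, mem_nhdsWithin_of_mem_nhds hCnhds, fun A f hf => ?_⟩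
    obtain ⟨F, hF, hFf⟩ := hf.exists_extension_translates hM hC hCfree
    refine ⟨_, F, hF, union_subset_union_right A fun w hw => ?_, hFf⟩
    exact mem_iUnion.mpr ⟨1, by simpa only [mem_preimage, one_smul] using hw⟩

/- Extend first over the fixed points, then to a neighbourhood, whose complement is compact and
acted on freely. -/
theorem exists_extension_univ [CompactSpace Z] [TietzeExtension.{u, v} ↥(M ∩ fixedPoints G X)]
    (hfree : IsSemifree G Z) (ρ : OrbitMapRetraction G X) (hMopen : IsOpen M)
    (hM : ∀ (g : G), ∀ x ∈ M, g • x ∈ M) (hf : EquivariantMapOn G f A M) :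
    ∃ F : Z → X, EquivariantMapOn G F univ M ∧ EqOn F f A := by
  obtain ⟨F₁, hF₁, hF₁f⟩ := hf.exists_extension_fixedPoints
  obtain ⟨B, hB, F₂, hF₂, hF₂F₁⟩ := hF₁.exists_extension_mem_nhdsSet ρ hMopen
  have hAB : A ∪ fixedPoints G Z ⊆ interior B := subset_interior_iff_mem_nhdsSet.mpr hB
  obtain ⟨B', F₃, hF₃, hB', hF₃F₂⟩ := hF₂.exists_extension_of_isCompact_of_free hM
    isOpen_interior.isClosed_compl.isCompact (K := (interior B)ᶜ)
    fun z hz g hg hgz => hz (hAB (Or.inr (hfree g hg z hgz)))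
  have huniv : B' = univ := eq_univ_of_forall fun z => hB' <| by
    by_cases hz : z ∈ interior B
    · exact Or.inl (interior_subset hz)
    · exact Or.inr hz
  refine ⟨F₃, huniv ▸ hF₃, ?_⟩
  exact ((hF₃F₂.mono (subset_union_left.trans (hAB.trans interior_subset))).trans
    (hF₂F₁.mono subset_union_left)).trans hF₁f

end EquivariantMapOn

theorem gCompressible_of_tietzeExtension {G : Type*} [Group G] [Finite G] {X : Type v}
    [TopologicalSpace X] [CompactSpace X] [T2Space X] [MulAction G X] [ContinuousConstSMul G X]
    (hfree : IsSemifree G X) (ρ : OrbitMapRetraction G X) {M : Set X} (hMopen : IsOpen M)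
    (hM : ∀ (g : G), ∀ x ∈ M, g • x ∈ M) [TietzeExtension.{v, v} M]
    [TietzeExtension.{v, v} ↥(M ∩ fixedPoints G X)] {star : X}
    (hstar : star ∈ M ∩ fixedPoints G X) {K : Set X} (hK : IsClosed K)
    (hKinv : ∀ (g : G), ∀ x ∈ K, g • x ∈ K) (hKM : K ⊆ M) :
    GCompressible (fun (g : G) (x : X) => g • x) {star} K := by
  classical
  let : MulAction G I :=
    { smul := fun _ t => t, one_smul := fun _ => rfl, mul_smul := fun _ _ _ => rfl }
  have : ContinuousConstSMul G I := ⟨fun _ => continuous_id⟩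
  have hfree' : IsSemifree G (X × I) := fun g hg z hz k =>
    Prod.ext (hfree g hg z.1 (congrArg Prod.fst hz) k) rfl
  let ends : X × I → X := fun z => if z.2 = 0 then z.1 else star
  have hzero (x : X) : ends (x, 0) = x := if_pos rfl
  have hone (x : X) : ends (x, 1) = star := if_neg one_ne_zero
  have hends : EquivariantMapOn G ends (K ×ˢ {0} ∪ K ×ˢ {1}) M := by
    refine ⟨(hK.prod isClosed_singleton).union (hK.prod isClosed_singleton), ?_, ?_, ?_, ?_⟩
    · exact fun g z hz => hz.imp (And.imp_left (hKinv g z.1)) (And.imp_left (hKinv g z.1))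
    · refine (continuousOn_fst.congr ?_).union_of_isClosed
        ((continuousOn_const (c := star)).congr ?_)
        (hK.prod isClosed_singleton) (hK.prod isClosed_singleton)
      · rintro ⟨x, _⟩ ⟨-, rfl⟩
        exact hzero x
      · rintro ⟨x, _⟩ ⟨-, rfl⟩
        exact hone x
    · rintro ⟨x, _⟩ (⟨hx, rfl⟩ | ⟨-, rfl⟩)
      · exact (hzero x).symm ▸ hKM hx
      · exact (hone x).symm ▸ hstar.1
    · rintro g ⟨x, _⟩ (⟨-, rfl⟩ | ⟨-, rfl⟩)
      · exact (hzero (g • x)).trans (congrArg (g • ·) (hzero x)).symm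
      · exact (hone (g • x)).trans ((hstar.2 g).symm.trans (congrArg (g • ·) (hone x)).symm)
  obtain ⟨H, hH, hHends⟩ := hends.exists_extension_univ hfree' ρ hMopen hM
  exact ⟨hKinv, H, hH.continuousOn.mono (subset_univ _),
    fun x hx => (hHends (Or.inl ⟨hx, mem_singleton _⟩)).trans (hzero x),
    fun g x _ t => hH.map_smul g (mem_univ (x, t)),
    fun x hx => (hHends (Or.inr ⟨hx, mem_singleton _⟩)).trans (hone x)⟩

end EquivariantExtension

section NearestPoint

open Metric

variable {E F : Type*} [NormedAddCommGroup E] [NormedSpace ℝ E]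

lemma exists_ball_norm_sub_sub_fderiv_le_sq [NormedAddCommGroup F] [NormedSpace ℝ F] {f : E → F}
    {a : E} (hf : ContDiffAt ℝ 2 f a) :
    ∃ C : ℝ, 0 ≤ C ∧ ∃ r > 0, ∀ x ∈ ball a r, ∀ y ∈ ball a r,
      ‖f y - f x - fderiv ℝ f x (y - x)‖ ≤ C * ‖y - x‖ ^ 2 := by
  obtain ⟨C, U, hU, hLip⟩ :=
    (hf.fderiv_right (m := 1) (by norm_num)).exists_lipschitzOnWith
  obtain ⟨r, hr, hball⟩ := Metric.mem_nhds_iff.mp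
    (Filter.inter_mem hU (hf.eventually (by norm_num)))
  have hsmooth : ∀ z ∈ ball a r, ContDiffAt ℝ 2 f z := fun z hz => (hball hz).2
  refine ⟨C, C.2, r, hr, fun x hx y hy => ?_⟩
  have hsegment : segment ℝ x y ⊆ ball a r := (convex_ball a r).segment_subset hx hy
  calc ‖f y - f x - fderiv ℝ f x (y - x)‖
      ≤ C * ‖y - x‖ * ‖y - x‖ := by
        refine (convex_segment x y).norm_image_sub_le_of_norm_fderiv_le' (𝕜 := ℝ)
          (fun z hz => (hsmooth z (hsegment hz)).differentiableAt two_ne_zero)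
          (fun z hz => ?_)
          (left_mem_segment ℝ x y) (right_mem_segment ℝ x y)
        refine (hLip.norm_sub_le (hball (hsegment hz)).1 (hball hx).1).trans ?_
        gcongr
        exact norm_sub_le_of_mem_segment hz
    _ = C * ‖y - x‖ ^ 2 := by ring

lemma exists_norm_sub_sub_fderiv_le_sq [NormedAddCommGroup F] [NormedSpace ℝ F] {S : Set E}
    (hS : IsCompact S) {f : E → F} (hf : ∀ x ∈ S, ContDiffAt ℝ 2 f x) :
    ∃ C : ℝ, 0 ≤ C ∧ ∃ δ > 0, ∀ x ∈ S, ∀ y, ‖y - x‖ < δ →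
      ‖f y - f x - fderiv ℝ f x (y - x)‖ ≤ C * ‖y - x‖ ^ 2 := by
  refine hS.induction_on (p := fun T => ∃ C : ℝ, 0 ≤ C ∧ ∃ δ > 0, ∀ x ∈ T, ∀ y, ‖y - x‖ < δ →
    ‖f y - f x - fderiv ℝ f x (y - x)‖ ≤ C * ‖y - x‖ ^ 2) ?_ ?_ ?_ fun a ha => ?_
  · exact ⟨0, le_rfl, 1, one_pos, fun x hx => hx.elim⟩
  · rintro T T' hTT' ⟨C, hC, δ, hδ, hbound⟩
    exact ⟨C, hC, δ, hδ, fun x hx => hbound x (hTT' hx)⟩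
  · rintro T T' ⟨C, hC, δ, hδ, hbound⟩ ⟨C', -, δ', hδ', hbound'⟩
    refine ⟨max C C', le_max_of_le_left hC, min δ δ', lt_min hδ hδ', ?_⟩
    rintro x (hx | hx) y hy
    · refine (hbound x hx y (hy.trans_le (min_le_left _ _))).trans ?_
      gcongr
      exact le_max_left _ _
    · refine (hbound' x hx y (hy.trans_le (min_le_right _ _))).trans ?_
      gcongr
      exact le_max_right _ _
  · obtain ⟨C, hC, r, hr, hbound⟩ := exists_ball_norm_sub_sub_fderiv_le_sq (hf a ha)
    refine ⟨ball a (r / 2), mem_nhdsWithin_of_mem_nhds (ball_mem_nhds a (by positivity)), C, hC,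
      r / 2, by positivity, fun x hx y hy => hbound x (ball_subset_ball (by linarith) hx) y ?_⟩
    rw [← dist_eq_norm] at hy
    exact mem_ball.mpr ((dist_triangle y x a).trans_lt (by linarith [mem_ball.mp hx]))

lemma inner_fderiv_eq_zero_of_isLocalMin_norm_sub [NormedAddCommGroup F] [InnerProductSpace ℝ F]
    {f : E → F} {v : F} {x : E} (hf : DifferentiableAt ℝ f x)
    (hmin : IsLocalMin (fun z => ‖f z - v‖) x) (u : E) :
    inner ℝ (f x - v) (fderiv ℝ f x u) = 0 := by
  have hsq : IsLocalMin (fun z => ‖f z - v‖ ^ 2) x :=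
    hmin.mono fun z hz => pow_le_pow_left₀ (norm_nonneg _) hz 2
  have hderiv := DFunLike.congr_fun
    (hsq.hasFDerivAt_eq_zero (hf.hasFDerivAt.sub_const v).norm_sq) u
  simpa [inner_sub_left] using hderiv

lemma exists_forall_eq_of_isMinOn_norm_sub [NormedAddCommGroup F] [InnerProductSpace ℝ F]
    {S : Set E} (hS : IsCompact S) {f : E → F} (hf : ∀ x ∈ S, ContDiffAt ℝ 2 f x)
    (hrange : range f ⊆ f '' S) (hexp : ∀ x ∈ S, ∀ y ∈ S, ‖y - x‖ ≤ ‖f y - f x‖) :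
    ∃ η > 0, ∀ v, ∀ x ∈ S, ∀ y ∈ S, ‖f x - v‖ < η → IsMinOn (fun z => ‖f z - v‖) S x →
      ‖f y - v‖ ≤ ‖f x - v‖ → y = x := by
  obtain ⟨C, hC, δ, hδ, hbound⟩ := exists_norm_sub_sub_fderiv_le_sq hS hf
  refine ⟨min (δ / 2) (1 / (2 * (C + 1))), by positivity, fun v x hx y hy hclose hmin hle => ?_⟩
  obtain ⟨hδ', hC'⟩ := lt_min_iff.mp hclose
  have hcritical : inner ℝ (f x - v) (fderiv ℝ f x (y - x)) = 0 := by
    refine inner_fderiv_eq_zero_of_isLocalMin_norm_sub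
      ((hf x hx).differentiableAt two_ne_zero) (Filter.Eventually.of_forall fun z => ?_) _
    obtain ⟨z', hz', heq⟩ := hrange (mem_range_self z)
    exact (hmin hz').trans_eq (congrArg (‖· - v‖) heq)
  set ε := ‖f x - v‖
  set d := ‖f y - f x‖
  have hd : d ≤ 2 * ε :=
    calc d = ‖f y - v - (f x - v)‖ := by rw [sub_sub_sub_cancel_right]
      _ ≤ ‖f y - v‖ + ε := norm_sub_le _ _
      _ ≤ 2 * ε := by linarith
  have hremainder : ‖f y - f x - fderiv ℝ f x (y - x)‖ ≤ C * d ^ 2 := by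
    refine (hbound x hx y ((hexp x hx y hy).trans_lt (by linarith))).trans ?_
    gcongr
    exact hexp x hx y hy
  have hinner : -inner ℝ (f x - v) (f y - f x) ≤ ε * (C * d ^ 2) :=
    calc -inner ℝ (f x - v) (f y - f x)
        = -inner ℝ (f x - v) (f y - f x - fderiv ℝ f x (y - x)) := by
          rw [inner_sub_right (f x - v) (f y - f x), hcritical, sub_zero]
      _ ≤ ε * ‖f y - f x - fderiv ℝ f x (y - x)‖ :=
          (neg_le_abs _).trans (abs_real_inner_le_norm _ _)
      _ ≤ ε * (C * d ^ 2) := by gcongr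
  have hexpand : ‖f y - v‖ ^ 2 = ε ^ 2 + 2 * inner ℝ (f x - v) (f y - f x) + d ^ 2 := by
    rw [← norm_add_sq_real, sub_add_sub_cancel']
  have hd0 : d = 0 := by
    have hεC : 2 * ε * C < 1 := by
      have := (lt_div_iff₀ (by positivity)).mp hC'
      nlinarith [norm_nonneg (f x - v)]
    have hsq : ‖f y - v‖ ^ 2 ≤ ε ^ 2 := pow_le_pow_left₀ (norm_nonneg _) hle 2
    have : d ^ 2 ≤ 2 * ε * C * d ^ 2 := by linarith
    by_contra hne
    have : 0 < d ^ 2 := by positivity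
    nlinarith
  exact sub_eq_zero.mp (norm_le_zero_iff.mp ((hexp x hx y hy).trans_eq hd0))

lemma continuousOn_of_unique_minimizer {Y X : Type*} [TopologicalSpace Y] [TopologicalSpace X]
    [CompactSpace X] {Q : Y → X → ℝ} (hQ : Continuous (Function.uncurry Q)) {D : Set Y}
    {μ : Y → X} (hμ : ∀ m ∈ D, ∀ x, Q m (μ m) ≤ Q m x)
    (huniq : ∀ m ∈ D, ∀ x, (∀ z, Q m x ≤ Q m z) → x = μ m) : ContinuousOn μ D := by
  rw [continuousOn_iff_continuous_domRestrict, continuous_iff_isClosed]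
  intro S hS
  have hvalue : Continuous fun q : D × X => Q q.1 q.2 :=
    hQ.comp ((continuous_subtype_val.comp continuous_fst).prodMk continuous_snd)
  have hclosed : IsClosed {q : D × X | (∀ z, Q q.1 q.2 ≤ Q q.1 z) ∧ q.2 ∈ S} := by
    have hmin : IsClosed {q : D × X | ∀ z, Q q.1 q.2 ≤ Q q.1 z} := by
      rw [Set.ofPred_forall]
      exact isClosed_iInter fun z => isClosed_le hvalue
        (hQ.comp ((continuous_subtype_val.comp continuous_fst).prodMk continuous_const))
    exact hmin.inter (hS.preimage continuous_snd)
  convert isClosedMap_fst_of_compactSpace _ hclosed using 1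
  ext m
  constructor
  · exact fun hm => ⟨(m, μ m), ⟨hμ m m.2, hm⟩, rfl⟩
  · rintro ⟨⟨m, x⟩, ⟨hmin, hx⟩, rfl⟩
    exact (huniq m m.2 x hmin : x = μ m) ▸ hx

end NearestPoint

section OrbitMapRetraction

open Metric MulAction

variable {G : Type*} [Group G]

lemma nonempty_orbitMapRetraction_of_unique_minimizer {X : Type*} [TopologicalSpace X]
    [CompactSpace X] [MulAction G X] {Q : (G → X) → X → ℝ} (hQ : Continuous (Function.uncurry Q))
    (hnonneg : ∀ m x, 0 ≤ Q m x) (hzero : ∀ x, Q (fun g => g • x) x = 0)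
    (hinv : ∀ (k : G) m x, Q (fun g => m (g * k)) (k • x) = Q m x) {η : ℝ} (hη : 0 < η)
    (huniq : ∀ m x y, Q m x < η → (∀ z, Q m x ≤ Q m z) → Q m y ≤ Q m x → y = x) :
    Nonempty (OrbitMapRetraction G X) := by
  have hmin (m : G → X) : ∃ x, ∀ z, Q m x ≤ Q m z := by
    have : Nonempty X := ⟨m 1⟩
    obtain ⟨x, -, hx⟩ := isCompact_univ.exists_isMinOn univ_nonempty
      (hQ.comp (Continuous.prodMk_right m)).continuousOn
    exact ⟨x, fun z => hx (mem_univ z)⟩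
  choose μ hμ using hmin
  let D : Set (G → X) := {m | ∃ x, Q m x < η}
  have horbit (x : X) : (fun g : G => g • x) ∈ D := ⟨x, (hzero x).trans_lt hη⟩
  have hμ_unique {m : G → X} (hm : m ∈ D) {x : X} (hx : ∀ z, Q m x ≤ Q m z) : x = μ m := by
    obtain ⟨y, hy⟩ := hm
    exact huniq m (μ m) x ((hμ m y).trans_lt hy) (hμ m) (hx (μ m))
  have htranslate (k : G) {m : G → X} (hm : m ∈ D) : (fun g => m (g * k)) ∈ D := by
    obtain ⟨x, hx⟩ := hm
    exact ⟨k • x, (hinv k m x).trans_lt hx⟩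
  refine ⟨⟨D, μ, ?_, horbit, fun x => ?_, ?_, htranslate, fun k m hm => ?_⟩⟩
  · rw [show D = ⋃ x, {m | Q m x < η} by ext; simp [D]]
    exact isOpen_iUnion fun x => isOpen_lt (hQ.comp (Continuous.prodMk_left x)) continuous_const
  · exact (hμ_unique (horbit x) fun z => (hzero x).trans_le (hnonneg _ z)).symm
  · exact continuousOn_of_unique_minimizer hQ (fun m _ => hμ m) fun m hm x => hμ_unique hm
  · refine (hμ_unique (htranslate k hm) fun z => ?_).symm
    calc Q (fun g => m (g * k)) (k • μ m) = Q m (μ m) := hinv k m (μ m)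
      _ ≤ Q m (k⁻¹ • z) := hμ m (k⁻¹ • z)
      _ = Q (fun g => m (g * k)) z := by rw [← hinv k m, smul_inv_smul]

variable {E : Type*} [NormedAddCommGroup E] [InnerProductSpace ℝ E]

theorem nonempty_orbitMapRetraction [Finite G] {S : Set E} (hS : IsCompact S) [MulAction G S]
    {r : E → S} (hr : ∀ x : S, r x = x)
    (hsmooth : ∀ (g : G) (x : S), ContDiffAt ℝ 2 (fun z => ((g • r z : S) : E)) x) :
    Nonempty (OrbitMapRetraction G S) := by
  classical
  cases nonempty_fintype G
  have : CompactSpace S := isCompact_iff_compactSpace.mp hS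
  let incl : (G → S) → PiLp 2 fun _ : G => E := fun m => WithLp.toLp 2 fun g => (m g : E)
  let f : E → PiLp 2 fun _ : G => E := fun z => incl fun g => g • r z
  let Q : (G → S) → S → ℝ := fun m x => ‖f x - incl m‖
  have hf : ∀ x ∈ S, ContDiffAt ℝ 2 f x := fun x hx =>
    contDiffAt_piLp' 2 fun g => hsmooth g ⟨x, hx⟩
  have hfcont : Continuous fun x : S => f x := continuous_iff_continuousAt.mpr fun x =>
    (hf x x.2).continuousAt.comp continuousAt_subtype_val
  have hincl : Continuous incl := by fun_prop
  have hfx (x : S) : f x = incl fun g => g • x := by simp only [f, hr]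
  have hexp : ∀ x ∈ S, ∀ y ∈ S, ‖y - x‖ ≤ ‖f y - f x‖ := fun x hx y hy => by
    simpa [f, incl, hr ⟨x, hx⟩, hr ⟨y, hy⟩] using PiLp.norm_apply_le (f y - f x) 1
  obtain ⟨η, hη, huniq⟩ := exists_forall_eq_of_isMinOn_norm_sub hS hf
    (range_subset_iff.mpr fun z => ⟨r z, (r z).2, by simp only [f, hr]⟩) hexp
  refine nonempty_orbitMapRetraction_of_unique_minimizer (Q := Q) ?_ (fun m x => norm_nonneg _)
    (fun x => ?_) (fun k m x => ?_) hη fun m x y hlt hmin hle => ?_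
  · exact ((hfcont.comp continuous_snd).sub (hincl.comp continuous_fst)).norm
  · simp only [Q, hfx, sub_self, norm_zero]
  · rw [← sq_eq_sq₀ (norm_nonneg _) (norm_nonneg _), hfx, hfx, PiLp.norm_sq_eq_of_L2,
      PiLp.norm_sq_eq_of_L2]
    refine Eq.trans ?_ (Equiv.sum_comp (Equiv.mulRight k) _)
    simp only [incl, PiLp.sub_apply, Equiv.coe_mulRight, mul_smul]
  · exact Subtype.ext (huniq (incl m) x x.2 y y.2 hlt (fun z hz => hmin ⟨z, hz⟩) hle)

lemma contMDiffAt_of_coe_eq_normalize {n : ℕ} [Fact (Module.finrank ℝ E = n + 1)]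
    {r : E → sphere (0 : E) 1} (hr : ∀ z ≠ 0, (r z : E) = NormedSpace.normalize z) {x : E}
    (hx : x ≠ 0) {m : WithTop ℕ∞} : ContMDiffAt 𝓘(ℝ, E) (𝓡 n) m r x := by
  let U : TopologicalSpace.Opens E := ⟨{0}ᶜ, isOpen_compl_singleton⟩
  have hcoe : ContMDiff 𝓘(ℝ, E) 𝓘(ℝ, E) m fun z : U => (r z : E) := fun z =>
    contMDiffAt_subtype_iff (f := fun z => (r z : E)).mpr <|
      ((contDiffAt_normalize z.2).contMDiffAt).congr_of_eventuallyEq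
        ((isOpen_compl_singleton.eventually_mem z.2).mono fun z hz => hr z hz)
  have hres : ContMDiff 𝓘(ℝ, E) (𝓡 n) m fun z : U => r z :=
    hcoe.codRestrict_sphere fun z => (r z).2
  exact contMDiffAt_subtype_iff.mp (hres ⟨x, hx⟩)

theorem nonempty_orbitMapRetraction_sphere [Finite G] {n : ℕ}
    [Fact (Module.finrank ℝ E = n + 1)] [MulAction G (sphere (0 : E) 1)]
    (hsmooth : ∀ g : G, ContMDiff (𝓡 n) (𝓡 n) 2 fun x : sphere (0 : E) 1 => g • x) :
    Nonempty (OrbitMapRetraction G (sphere (0 : E) 1)) := by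
  classical
  have hdim : Module.finrank ℝ E = n + 1 := Fact.out
  have : FiniteDimensional ℝ E := Module.finite_of_finrank_eq_succ hdim
  have : Nontrivial E := Module.nontrivial_of_finrank_eq_succ hdim
  obtain ⟨x₀, hx₀⟩ := NormedSpace.sphere_nonempty (E := E) (x := 0) (r := 1) |>.mpr zero_le_one
  let r : E → sphere (0 : E) 1 := fun z =>
    if hz : z = 0 then ⟨x₀, hx₀⟩ else ⟨NormedSpace.normalize z, normalize_mem_sphere hz⟩
  have hr : ∀ z ≠ 0, (r z : E) = NormedSpace.normalize z := fun z hz => by simp only [r, dif_neg hz]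
  have hne (x : sphere (0 : E) 1) : (x : E) ≠ 0 := ne_zero_of_mem_unit_sphere x
  refine nonempty_orbitMapRetraction (isCompact_sphere 0 1) (r := r) (fun x => Subtype.ext ?_)
    fun g x => ContMDiffAt.contDiffAt ?_
  · rw [hr _ (hne x), NormedSpace.normalize_eq_self_of_norm_eq_one (norm_eq_of_mem_sphere x)]
  · exact (contMDiff_coe_sphere _).comp _
      ((hsmooth g _).comp _ (contMDiffAt_of_coe_eq_normalize hr (hne x)))

end OrbitMapRetraction

section Planners

open unitInterval Set

variable {G X : Type*} [TopologicalSpace X] {act : G → X → X} {A U V : Set X}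

lemma GCompressible.mono (h : GCompressible act A U) (hVU : V ⊆ U)
    (hV : ∀ g x, x ∈ V → act g x ∈ V) : GCompressible act A V := by
  obtain ⟨-, H, hH, hH0, hHact, hH1⟩ := h
  exact ⟨hV, H, hH.mono (prod_mono hVU subset_rfl), fun x hx => hH0 x (hVU hx),
    fun g x hx => hHact g x (hVU hx), fun x hx => hH1 x (hVU hx)⟩

lemma GCompressible.union (hU : GCompressible act A U) (hV : GCompressible act A V)
    (hUo : IsOpen U) (hVo : IsOpen V) (hUV : Disjoint U V) : GCompressible act A (U ∪ V) := by
  classical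
  obtain ⟨hUact, H, hH, hH0, hHact, hH1⟩ := hU
  obtain ⟨hVact, K, hK, hK0, hKact, hK1⟩ := hV
  let L : X × I → X := fun z => if z.1 ∈ U then H z else K z
  have hLU (x : X) (hx : x ∈ U) (t : I) : L (x, t) = H (x, t) := if_pos hx
  have hLV (x : X) (hx : x ∈ V) (t : I) : L (x, t) = K (x, t) :=
    if_neg (disjoint_right.mp hUV hx)
  refine ⟨fun g x hx => hx.imp (hUact g x) (hVact g x), L, ?_, ?_, ?_, ?_⟩
  · rw [union_prod]
    exact (hH.congr fun z hz => hLU z.1 hz.1 z.2).union_of_isOpen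
      (hK.congr fun z hz => hLV z.1 hz.1 z.2) (hUo.prod isOpen_univ) (hVo.prod isOpen_univ)
  · rintro x (hx | hx)
    · rw [hLU x hx, hH0 x hx]
    · rw [hLV x hx, hK0 x hx]
  · rintro g x (hx | hx) t
    · rw [hLU x hx, hLU _ (hUact g x hx), hHact g x hx]
    · rw [hLV x hx, hLV _ (hVact g x hx), hKact g x hx]
  · rintro x (hx | hx)
    · rw [hLU x hx]; exact hH1 x hx
    · rw [hLV x hx]; exact hK1 x hx

lemma GCompressible.exists_continuousOn_path (h : GCompressible act A U) :
    ∃ η : X → C(I, X), ContinuousOn η U ∧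
      ∀ x ∈ U, η x 0 = x ∧ η x 1 ∈ A ∧ ∀ g t, η (act g x) t = act g (η x t) := by
  classical
  obtain ⟨hUact, H, hH, hH0, hHact, hH1⟩ := h
  have hcont : Continuous fun z : U × I => H (z.1, z.2) :=
    hH.comp_continuous (by fun_prop) fun z => ⟨z.1.2, mem_univ _⟩
  let paths : C(U, C(I, X)) := ContinuousMap.curry ⟨_, hcont⟩
  let η : X → C(I, X) := fun x => if hx : x ∈ U then paths ⟨x, hx⟩ else .const I x
  have hη (x : X) (hx : x ∈ U) : η x = paths ⟨x, hx⟩ := dif_pos hx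
  have hηH (x : X) (hx : x ∈ U) (t : I) : η x t = H (x, t) := by
    rw [hη x hx]; rfl
  refine ⟨η, ?_, fun x hx => ⟨?_, ?_, fun g t => ?_⟩⟩
  · rw [continuousOn_iff_continuous_domRestrict]
    exact paths.continuous.congr fun x => (hη x x.2).symm
  · rw [hηH x hx, hH0 x hx]
  · rw [hηH x hx]; exact hH1 x hx
  · rw [hηH x hx, hηH _ (hUact g x hx), hHact g x hx]

lemma invTCcover_of_gCompressible_singleton {k : ℕ} {V : Fin k → Set X} {star : X}
    (hopen : ∀ i, IsOpen (V i)) (hcov : ∀ x y, ∃ i, x ∈ V i ∧ y ∈ V i)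
    (hV : ∀ i, GCompressible act {star} (V i)) : invTCcover act k := by
  choose η hη hηV using fun i => (hV i).exists_continuousOn_path
  have hstar (i : Fin k) (x : X) (hx : x ∈ V i) : η i x 1 = star := (hηV i x hx).2.1
  let rev : C(I, I) := ⟨σ, continuous_symm⟩
  refine ⟨fun i => V i ×ˢ V i, fun i => (hopen i).prod (hopen i), ?_, fun i => ⟨?_, ?_⟩⟩
  · refine eq_univ_of_forall fun z => ?_
    obtain ⟨i, hz⟩ := hcov z.1 z.2
    exact mem_iUnion.mpr ⟨i, hz⟩
  · exact fun g₁ g₂ z hz => ⟨(hV i).1 g₁ _ hz.1, (hV i).1 g₂ _ hz.2⟩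
  refine ⟨fun z => η i z.1, fun z => (η i z.2).comp rev, ?_, ?_, fun z hz => ⟨?_, ?_, ?_⟩,
    fun g₁ g₂ z hz t => ⟨?_, ?_⟩⟩
  · exact (hη i).comp continuousOn_fst fun z hz => hz.1
  · exact (ContinuousMap.continuous_precomp rev).comp_continuousOn
      ((hη i).comp continuousOn_snd fun z hz => hz.2)
  · exact (hηV i _ hz.1).1
  · simpa [rev] using (hηV i _ hz.2).1
  · simp [rev, hstar i _ hz.1, hstar i _ hz.2]
  · exact (hηV i _ hz.1).2.2 g₁ t
  · exact (hηV i _ hz.2).2.2 g₂ (σ t)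

/- Two points never fail all three sets: if one of them has `φ = 1 / 2`, the value of `φ` at the
other is above `1 / 4` or below `3 / 4`. -/
theorem invTCcover_three_of_gCompressible_levels {φ : X → ℝ} (hφ : Continuous φ)
    (hact : ∀ g x, φ (act g x) = φ x) {star : X}
    (hge : GCompressible act {star} {x | 1 / 4 ≤ φ x})
    (hle : GCompressible act {star} {x | φ x ≤ 3 / 4}) : invTCcover act 3 := by
  have hpreimage (S : Set ℝ) (g : G) (x : X) (hx : x ∈ φ ⁻¹' S) : act g x ∈ φ ⁻¹' S := by
    rwa [mem_preimage, hact]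
  have hne : GCompressible act {star} (φ ⁻¹' Iio (1 / 2) ∪ φ ⁻¹' Ioi (1 / 2)) := by
    refine (hle.mono ?_ (hpreimage _)).union (hge.mono ?_ (hpreimage _))
      (isOpen_Iio.preimage hφ) (isOpen_Ioi.preimage hφ)
      ((Ioi_disjoint_Iio_same (a := (1 / 2 : ℝ))).symm.preimage φ)
    · intro x (hx : φ x < 1 / 2)
      exact hx.le.trans (by norm_num)
    · intro x (hx : 1 / 2 < φ x)
      exact le_trans (by norm_num) hx.le
  have hsplit (x : X) (hx : φ x ≠ 1 / 2) : x ∈ φ ⁻¹' Iio (1 / 2) ∪ φ ⁻¹' Ioi (1 / 2) :=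
    lt_or_gt_of_ne hx
  refine invTCcover_of_gCompressible_singleton (star := star)
    (V := ![φ ⁻¹' Ioi (1 / 4), φ ⁻¹' Iio (3 / 4), φ ⁻¹' Iio (1 / 2) ∪ φ ⁻¹' Ioi (1 / 2)])
    ?_ ?_ ?_
  · exact Fin.forall_fin_succ.mpr ⟨isOpen_Ioi.preimage hφ, Fin.forall_fin_two.mpr
      ⟨isOpen_Iio.preimage hφ, (isOpen_Iio.preimage hφ).union (isOpen_Ioi.preimage hφ)⟩⟩
  · intro x y
    by_cases hgt : 1 / 4 < φ x ∧ 1 / 4 < φ y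
    · exact ⟨0, hgt⟩
    by_cases hlt : φ x < 3 / 4 ∧ φ y < 3 / 4
    · exact ⟨1, hlt⟩
    exact ⟨2, hsplit x (by grind), hsplit y (by grind)⟩
  · exact Fin.forall_fin_succ.mpr ⟨hge.mono (preimage_mono Ioi_subset_Ici_self) (hpreimage _),
      Fin.forall_fin_two.mpr
        ⟨hle.mono (preimage_mono Iio_subset_Iic_self) (hpreimage _), hne⟩⟩

end Planners

section ThreePlanners

open unitInterval MulAction Set

variable {G : Type*} [Group G] [Finite G]

lemma exists_continuous_smul_invariant_zero_one {X : Type*} [TopologicalSpace X] [NormalSpace X]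
    [T1Space X] [MulAction G X] [ContinuousConstSMul G X] {a b : X} (ha : a ∈ fixedPoints G X)
    (hb : b ∈ fixedPoints G X) (hab : a ≠ b) :
    ∃ φ : X → ℝ, Continuous φ ∧ (∀ (g : G) x, φ (g • x) = φ x) ∧ φ a = 0 ∧ φ b = 1 := by
  have : Fintype G := Fintype.ofFinite G
  obtain ⟨u, hua, hub, -⟩ := exists_continuous_zero_one_of_isClosed (isClosed_singleton (x := a))
    (isClosed_singleton (x := b)) (disjoint_singleton.mpr hab)
  have hua : u a = 0 := hua rfl
  have hub : u b = 1 := hub rfl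
  refine ⟨fun x => (Fintype.card G : ℝ)⁻¹ * ∑ g : G, u (g • x), ?_, fun h x => ?_, ?_, ?_⟩
  · exact continuous_const.mul (continuous_finsetSum _ fun g _ =>
      u.continuous.comp (continuous_const_smul g))
  · simp only [smul_smul]
    exact congrArg _ (Fintype.sum_equiv (Equiv.mulRight h) _ _ fun g => rfl)
  · simp [mem_fixedPoints.mp ha _, hua]
  · simp [mem_fixedPoints.mp hb _, hub]

universe v

variable {X : Type v} [TopologicalSpace X] [CompactSpace X] [T2Space X] [MulAction G X]
  [ContinuousConstSMul G X]

theorem invTCcover_three_of_tietzeExtension_compl_singleton (hfree : IsSemifree G X)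
    (ρ : OrbitMapRetraction G X) (hinf : (fixedPoints G X).Infinite)
    (hX : ∀ x ∈ fixedPoints G X, TietzeExtension.{v, v} ↥({x}ᶜ : Set X))
    (hF : ∀ x ∈ fixedPoints G X, TietzeExtension.{v, v} ↥({x}ᶜ ∩ fixedPoints G X)) :
    invTCcover (fun (g : G) (x : X) => g • x) 3 := by
  obtain ⟨a, ha⟩ := hinf.nonempty
  obtain ⟨b, hb, hba⟩ := hinf.exists_notMem_finite (finite_singleton a)
  obtain ⟨star, hstar, hsab⟩ := hinf.exists_notMem_finite (toFinite {a, b})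
  obtain ⟨hsa, hsb⟩ : star ≠ a ∧ star ≠ b := by simpa using hsab
  obtain ⟨φ, hφ, hφG, hφa, hφb⟩ :=
    exists_continuous_smul_invariant_zero_one ha hb (Ne.symm hba)
  have hcompl (x : X) (hx : x ∈ fixedPoints G X) (hsx : star ≠ x) (S : Set ℝ)
      (hS : IsClosed S) (hxS : φ x ∉ S) :
      GCompressible (fun (g : G) (y : X) => g • y) {star} (φ ⁻¹' S) := by
    have := hX x hx
    have := hF x hx
    refine gCompressible_of_tietzeExtension hfree ρ (M := {x}ᶜ) isOpen_compl_singleton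
      (fun g y hy hgy => hy ?_) ⟨hsx, hstar⟩ (hS.preimage hφ) (fun g y hy => ?_) ?_
    · exact smul_left_cancel g (hgy.trans (hx g).symm)
    · rwa [mem_preimage, hφG]
    · exact subset_compl_singleton_iff.mpr hxS
  refine invTCcover_three_of_gCompressible_levels hφ hφG
    (hcompl a ha hsa (Ici (1 / 4)) isClosed_Ici ?_) (hcompl b hb hsb (Iic (3 / 4)) isClosed_Iic ?_)
  · rw [hφa, mem_Ici]; norm_num
  · rw [hφb, mem_Iic]; norm_num

end ThreePlanners

section Sphere

open Metric Set

variable {E : Type*} [NormedAddCommGroup E] [InnerProductSpace ℝ E]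

universe u

lemma tietzeExtension_compl_singleton_sphere {n : ℕ} [Fact (Module.finrank ℝ E = n + 1)]
    (v : sphere (0 : E) 1) : TietzeExtension.{u} ↥({v}ᶜ : Set (sphere (0 : E) 1)) := by
  let stereo := (stereographic' n v).toHomeomorphSourceTarget
  rw [stereographic'_source, stereographic'_target] at stereo
  exact .of_homeo ((stereo.trans (Homeomorph.Set.univ _)).trans
    (EuclideanSpace.equiv (Fin n) ℝ).toHomeomorph)

lemma infinite_sphere (hE : 1 < Module.rank ℝ E) : Infinite (sphere (0 : E) 1) := by
  have : Nontrivial E := rank_pos_iff_nontrivial.mp (zero_lt_one.trans hE)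
  obtain ⟨v, hv⟩ := NormedSpace.sphere_nonempty (x := (0 : E)).mpr zero_le_one
  let w : sphere (0 : E) 1 := ⟨v, hv⟩
  exact infinite_coe_iff.mpr ((isPreconnected_sphere hE 0 1).infinite_of_nontrivial
    ⟨v, hv, -v, (-w).2, fun h => ne_neg_of_mem_unit_sphere ℝ w (Subtype.ext h)⟩)

lemma tietzeExtension_compl_singleton_inter {X Y : Type*} [TopologicalSpace X]
    [TopologicalSpace Y] {F : Set X} (e : F ≃ₜ Y) {x : X} (hx : x ∈ F)
    [TietzeExtension.{u} ↥({e ⟨x, hx⟩}ᶜ : Set Y)] : TietzeExtension.{u} ↥({x}ᶜ ∩ F) := by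
  let f : ↥({e ⟨x, hx⟩}ᶜ : Set Y) → X := fun y => e.symm y
  have hf : Topology.IsEmbedding f :=
    Topology.IsEmbedding.subtypeVal.comp (e.symm.isEmbedding.comp .subtypeVal)
  have hrange : range f = {x}ᶜ ∩ F := by
    ext z
    constructor
    · rintro ⟨y, rfl⟩
      refine ⟨fun hy => y.2 ?_, (e.symm y).2⟩
      exact e.symm_apply_eq.mp (Subtype.ext hy)
    · rintro ⟨hzx, hz⟩
      refine ⟨⟨e ⟨z, hz⟩, fun h => hzx ?_⟩, by simp [f]⟩
      exact congrArg Subtype.val (e.injective h)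
  exact hrange ▸ TietzeExtension.of_homeo hf.toHomeomorph.symm

end Sphere

lemma isSemifree_of_prime_card {G X : Type*} [Group G] [MulAction G X]
    (hG : (Nat.card G).Prime) : IsSemifree G X := by
  have : Fact (Nat.card G).Prime := ⟨hG⟩
  intro g hg x hgx h
  have htop : MulAction.stabilizer G x = ⊤ := by
    refine (MulAction.stabilizer G x).eq_bot_or_eq_top_of_prime_card.resolve_left fun hbot => hg ?_
    exact (Subgroup.eq_bot_iff_forall _).mp hbot g hgx
  exact MulAction.mem_stabilizer_iff.mp (htop ▸ Subgroup.mem_top h)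

end PaperTC

theorem invTC_semilinear_sphere_between_two_and_three_general {G : Type*} [Group G] [Finite G]
    {n k : ℕ} (hk : 0 < k) [MulAction G (Sph n)]
    (hsmooth : ∀ g : G, ContMDiff (𝓡 n) (𝓡 n) 2 fun x : Sph n => g • x)
    (hfree : IsSemifree G (Sph n)) (e : MulAction.fixedPoints G (Sph n) ≃ₜ Sph k) :
    2 ≤ invTC (fun (g : G) (x : Sph n) => g • x) ∧
      invTC (fun (g : G) (x : Sph n) => g • x) ≤ 3 := by
  have : ContinuousConstSMul G (Sph n) := ⟨fun g => (hsmooth g).continuous⟩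
  have : Infinite (Sph k) := infinite_sphere (Module.lt_rank_of_lt_finrank (by simpa using hk))
  have hinf : (MulAction.fixedPoints G (Sph n)).Infinite :=
    infinite_coe_iff.mp (e.toEquiv.infinite_iff.mpr ‹_›)
  have : Fact (Module.finrank ℝ (EuclideanSpace ℝ (Fin (n + 1))) = n + 1) :=
    ⟨finrank_euclideanSpace_fin⟩
  have : Fact (Module.finrank ℝ (EuclideanSpace ℝ (Fin (k + 1))) = k + 1) :=
    ⟨finrank_euclideanSpace_fin⟩
  constructor
  · refine two_le_minCover fun hcover => ?_
    have : ContractibleSpace (MulAction.fixedPoints G (Sph n)) :=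
      contractibleSpace_fixedSet_of_invTCcover_one hinf.nonempty hcover
    exact not_contractibleSpace_sphere e.symm.contractibleSpace
  · obtain ⟨ρ⟩ := nonempty_orbitMapRetraction_sphere hsmooth
    refine minCover_le (by norm_num) (invTCcover_three_of_tietzeExtension_compl_singleton hfree ρ
      hinf (fun x _ => tietzeExtension_compl_singleton_sphere (n := n) x) fun x hx => ?_)
    have := tietzeExtension_compl_singleton_sphere (n := k) (e ⟨x, hx⟩)
    exact tietzeExtension_compl_singleton_inter e hx

/-- Let `ℤ/p` act smoothly on the standard sphere `S^n` by a semilinear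
action with path-connected fixed point set: the fixed point set is homeomorphic to `S^k`
for some `0 < k ≤ n` and, in case `k = n - 2`, the complement of the fixed point set is
homotopy equivalent to `S¹`.  Then `2 ≤ TC^{ℤ/p}(S^n) ≤ 3`. -/
theorem invTC_semilinear_sphere_between_two_and_three (p : ℕ) (hp : p.Prime)
    (n k : ℕ) (hk : 0 < k) (hkn : k ≤ n)
    (act : ZMod p → ↥(Sph n) → ↥(Sph n))
    (act_zero : ∀ x, act 0 x = x)
    (act_add : ∀ g h x, act (g + h) x = act g (act h x))
    (act_smooth : ∀ g, ContMDiff (𝓡 n) (𝓡 n) (⊤ : ℕ∞) (act g))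
    (hhomeo : Nonempty (↥(fixedSet act) ≃ₜ ↥(Sph k)))
    (hcodim2 : k = n - 2 →
      Nonempty (ContinuousMap.HomotopyEquiv ↥(fixedSet act)ᶜ ↥(Sph 1))) :
    2 ≤ invTC act ∧ invTC act ≤ 3 := by
  have : NeZero p := ⟨hp.ne_zero⟩
  let _ : MulAction (Multiplicative (ZMod p)) (Sph n) :=
    { smul := act, one_smul := act_zero, mul_smul := act_add }
  obtain ⟨e⟩ := hhomeo
  exact invTC_semilinear_sphere_between_two_and_three_general (G := Multiplicative (ZMod p)) hk
    (fun g => (act_smooth g).of_le (by norm_cast))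
    (isSemifree_of_prime_card (by simpa using hp)) e
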